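/- Let R = k[x_1,…,x_n] be a polynomial ring over a field k and let I ⊆ R be a nonzero monomial ideal. Let lcm(I) denote the least common multiple of the minimal monomial generators of I. Then reg I ≤ deg lcm(I) − height I + 1. -/

import Mathlib

open MvPolynomial

/-- The depth of the `R`-module `M` with respect to the ideal `J`: the supremum of
lengths of `M`-regular sequences consisting of elements of `J`. -/
noncomputable def idealDepth {R : Type*} [CommRing R] (J : Ideal R)
    (M : Type*) [AddCommGroup M] [Module R M] : ℕ :=
  sSup {d : ℕ | ∃ rs : List R, rs.length = d ∧ (∀ r ∈ rs, r ∈ J) ∧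
    RingTheory.Sequence.IsRegular M rs}

/-- The irrelevant maximal homogeneous ideal `(x₁, …, xₙ)` of the polynomial ring. -/
noncomputable def mxIdeal (k : Type*) [Field k] (n : ℕ) : Ideal (MvPolynomial (Fin n) k) :=
  Ideal.span (Set.range MvPolynomial.X)

/-- `depth R/I`, the depth of the quotient module with respect to the maximal
homogeneous ideal. -/
noncomputable def pdepth {k : Type*} [Field k] {n : ℕ}
    (I : Ideal (MvPolynomial (Fin n) k)) : ℕ :=
  idealDepth (mxIdeal k n) (MvPolynomial (Fin n) k ⧸ I)

/-- `p` is homogeneous of degree `d ∈ ℤ` (where `0` is homogeneous of any degree). -/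
def HomogOfDeg {k : Type*} [Field k] {n : ℕ} (p : MvPolynomial (Fin n) k) (d : ℤ) : Prop :=
  p = 0 ∨ ∃ m : ℕ, (m : ℤ) = d ∧ p.IsHomogeneous m

/-- A finite graded free resolution of `R/I`: free modules `Fᵢ = ⊕_j R(-D i j)` (of rank
`b i`, zero for `i > len`), differentials given by matrices `A i : Fᵢ₊₁ → Fᵢ` whose entries
are homogeneous of the appropriate degrees, and an augmentation `F₀ → R/I` given by the
homogeneous column `v`, the whole complex being exact. -/
structure GradedFreeRes {k : Type*} [Field k] {n : ℕ}
    (I : Ideal (MvPolynomial (Fin n) k)) where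
  len : ℕ
  b : ℕ → ℕ
  hb : ∀ i : ℕ, len < i → b i = 0
  D : (i : ℕ) → Fin (b i) → ℤ
  A : (i : ℕ) → Matrix (Fin (b i)) (Fin (b (i+1))) (MvPolynomial (Fin n) k)
  v : Fin (b 0) → MvPolynomial (Fin n) k
  hv : ∀ r, HomogOfDeg (v r) (D 0 r)
  hA : ∀ (i : ℕ) r c, HomogOfDeg (A i r c) (D (i+1) c - D i r)
  haug : Function.Surjective
    (fun w : Fin (b 0) → MvPolynomial (Fin n) k => Ideal.Quotient.mk I (∑ r, w r * v r))
  hex0 : Function.Exact ((A 0).mulVec)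
    (fun w : Fin (b 0) → MvPolynomial (Fin n) k => Ideal.Quotient.mk I (∑ r, w r * v r))
  hex : ∀ i : ℕ, Function.Exact ((A (i+1)).mulVec) ((A i).mulVec)

/-- The Castelnuovo–Mumford regularity `reg R/I`: the least `r` such that some finite
graded free resolution of `R/I` has all its `i`-th twists `≤ r + i`; equivalently (via the
minimal free resolution) `reg R/I = max { j - i : β_{i,j}(R/I) ≠ 0 }`. -/
noncomputable def regQuot {k : Type*} [Field k] {n : ℕ}
    (I : Ideal (MvPolynomial (Fin n) k)) : ℤ :=
  sInf {r : ℤ | ∃ F : GradedFreeRes I, ∀ (i : ℕ) (j : Fin (F.b i)), F.D i j - (i : ℤ) ≤ r}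

/-- The regularity of a (nonzero) homogeneous ideal: `reg I = reg R/I + 1`. -/
noncomputable def regIdeal {k : Type*} [Field k] {n : ℕ}
    (I : Ideal (MvPolynomial (Fin n) k)) : ℤ :=
  regQuot I + 1

/-- An ideal is homogeneous if it is generated by homogeneous polynomials. -/
def IsHomogeneousIdeal {k : Type*} [Field k] {n : ℕ}
    (I : Ideal (MvPolynomial (Fin n) k)) : Prop :=
  ∃ T : Set (MvPolynomial (Fin n) k), (∀ p ∈ T, ∃ d : ℕ, p.IsHomogeneous d) ∧ I = Ideal.span T

/-- A monomial ideal: an ideal generated by monomials. -/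
def IsMonomialIdeal {k : Type*} [Field k] {n : ℕ}
    (I : Ideal (MvPolynomial (Fin n) k)) : Prop :=
  ∃ T : Set (Fin n →₀ ℕ), I = Ideal.span ((fun m => monomial m (1 : k)) '' T)


/-- The height of an ideal: the infimum of the heights of the prime ideals containing it. -/
noncomputable def idealHeight {R : Type*} [CommRing R] (I : Ideal R) : ℕ∞ :=
  ⨅ (p : PrimeSpectrum R) (_ : I ≤ p.asIdeal), Order.height p

/-!
For a monomial ideal `I` and a variable `x`, the ideals `I : x` and `I + (x)` are again monomial and
fit into the exact sequence `0 → R/(I : x)(-1) → R/I → R/(I + (x)) → 0`. The horseshoe construction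
turns it into the estimate `reg R/I ≤ max (reg R/(I : x) + 1) (reg R/(I + (x)))`. If `x` divides a
generator of degree at least two, then passing to `I : x` lowers the degree of the lcm by at least
one, passing to `I + (x)` does not raise it, and the height does not drop in either case, so the
bound `reg R/I ≤ deg lcm(I) - height I` follows by induction. The induction stops at ideals
generated by variables. For these, iterated mapping cones of the same sequences give `reg R/I ≤ 0`,
while `height I` is at most the number of variables by Krull's height theorem.
-/

section GradedModules

variable {R Γ L M N : Type*} [Ring R] [AddCommGroup L] [AddCommGroup M] [AddCommGroup N]
  [Module R L] [Module R M] [Module R N]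

/-- A degree-preserving surjection of graded modules. A grading is encoded as a bare family of
subgroups, and surjectivity is required in every degree. -/
structure IsGradedEpi (ℒ : Γ → AddSubgroup L) (ℳ : Γ → AddSubgroup M) (φ : L →ₗ[R] M) :
    Prop where
  surjective : Function.Surjective φ
  map_mem {d : Γ} {x : L} : x ∈ ℒ d → φ x ∈ ℳ d
  exists_mem {d : Γ} {y : M} : y ∈ ℳ d → ∃ x ∈ ℒ d, φ x = y

theorem IsGradedEpi.comp {ℒ : Γ → AddSubgroup L} {ℳ : Γ → AddSubgroup M}
    {𝒩 : Γ → AddSubgroup N} {ψ : M →ₗ[R] N} {φ : L →ₗ[R] M} (hψ : IsGradedEpi ℳ 𝒩 ψ)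
    (hφ : IsGradedEpi ℒ ℳ φ) : IsGradedEpi ℒ 𝒩 (ψ ∘ₗ φ) where
  surjective := hψ.surjective.comp hφ.surjective
  map_mem hx := hψ.map_mem (hφ.map_mem hx)
  exists_mem hz := by
    obtain ⟨y, hy, rfl⟩ := hψ.exists_mem hz
    obtain ⟨x, hx, rfl⟩ := hφ.exists_mem hy
    exact ⟨x, hx, rfl⟩

theorem isGradedEpi_of_equiv {ℒ : Γ → AddSubgroup L} {ℳ : Γ → AddSubgroup M} (e : L ≃ₗ[R] M)
    (he : ∀ d x, e x ∈ ℳ d ↔ x ∈ ℒ d) : IsGradedEpi ℒ ℳ e.toLinearMap where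
  surjective := e.surjective
  map_mem hx := (he _ _).2 hx
  exists_mem {d y} hy := ⟨e.symm y, (he d _).1 (by simpa using hy), e.apply_symm_apply y⟩

/-- The grading induced on a submodule. -/
def subGrading (ℒ : Γ → AddSubgroup L) (K : Submodule R L) (d : Γ) : AddSubgroup K :=
  (ℒ d).comap K.subtype.toAddMonoidHom

@[simp]
theorem mem_subGrading {ℒ : Γ → AddSubgroup L} {K : Submodule R L} {d : Γ} {x : K} :
    x ∈ subGrading ℒ K d ↔ (x : L) ∈ ℒ d :=
  Iff.rfl

/-- A short exact sequence of graded modules and degree-preserving maps. The grading of the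
submodule has to be induced by that of the middle term. -/
structure IsGradedShortExact (ℒ : Γ → AddSubgroup L) (ℳ : Γ → AddSubgroup M)
    (𝒩 : Γ → AddSubgroup N) (f : L →ₗ[R] M) (g : M →ₗ[R] N) : Prop where
  injective : Function.Injective f
  exact : Function.Exact f g
  mem_iff {d : Γ} {x : L} : f x ∈ ℳ d ↔ x ∈ ℒ d
  epi : IsGradedEpi ℳ 𝒩 g

variable {L' M' N' : Type*} [AddCommGroup L'] [AddCommGroup M'] [AddCommGroup N']
  [Module R L'] [Module R M'] [Module R N']

/-- The map induced on kernels by a commutative square. -/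
def kerMap (α : L →ₗ[R] L') (β : M →ₗ[R] M') (f : L →ₗ[R] M) (f' : L' →ₗ[R] M')
    (comm : β ∘ₗ f = f' ∘ₗ α) : LinearMap.ker α →ₗ[R] LinearMap.ker β :=
  f.restrict fun x (hx : α x = 0) => by
    rw [LinearMap.mem_ker, ← LinearMap.comp_apply, comm, LinearMap.comp_apply, hx, map_zero]

section Snake

variable {ℒ : Γ → AddSubgroup L} {ℳ : Γ → AddSubgroup M} {𝒩 : Γ → AddSubgroup N}
  {ℒ' : Γ → AddSubgroup L'} {ℳ' : Γ → AddSubgroup M'} {𝒩' : Γ → AddSubgroup N'}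
  {f : L →ₗ[R] M} {g : M →ₗ[R] N} {f' : L' →ₗ[R] M'} {g' : M' →ₗ[R] N'}
  {α : L →ₗ[R] L'} {β : M →ₗ[R] M'} {γ : N →ₗ[R] N'}

theorem sub_mem_ker (comm : β ∘ₗ f = f' ∘ₗ α) {x : L} {y : M} (hxy : f' (α x) = β y) :
    y - f x ∈ LinearMap.ker β := by
  rw [LinearMap.mem_ker, map_sub, ← LinearMap.comp_apply, comm, LinearMap.comp_apply, hxy, sub_self]

theorem apply_add_of_apply_eq_sub (comm : β ∘ₗ f = f' ∘ₗ α) {x : M} {y : M'} {l : L}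
    (h : f' (α l) = y - β x) : β (x + f l) = y := by
  rw [map_add, ← LinearMap.comp_apply, comm, LinearMap.comp_apply, h, add_sub_cancel]

theorem IsGradedShortExact.apply_sub (S : IsGradedShortExact ℒ ℳ 𝒩 f g) (y : M) (x : L) :
    g (y - f x) = g y := by
  rw [map_sub, S.exact.apply_apply_eq_zero, sub_zero]

theorem IsGradedShortExact.exists_apply_eq_sub (S : IsGradedShortExact ℒ' ℳ' 𝒩' f' g')
    (hg : γ ∘ₗ g = g' ∘ₗ β) {x : M} {y : M'} (hxy : γ (g x) = g' y) :
    ∃ z, f' z = y - β x :=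
  (S.exact _).1 <| by
    rw [map_sub, ← hxy, ← LinearMap.comp_apply, hg, LinearMap.comp_apply, sub_self]

theorem IsGradedShortExact.epi_middle (S : IsGradedShortExact ℒ ℳ 𝒩 f g)
    (S' : IsGradedShortExact ℒ' ℳ' 𝒩' f' g') (hf : β ∘ₗ f = f' ∘ₗ α) (hg : γ ∘ₗ g = g' ∘ₗ β)
    (hα : IsGradedEpi ℒ ℒ' α) (hγ : IsGradedEpi 𝒩 𝒩' γ)
    (hβ : ∀ d, ∀ x ∈ ℳ d, β x ∈ ℳ' d) : IsGradedEpi ℳ ℳ' β where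
  surjective y := by
    obtain ⟨z, hz⟩ := hγ.surjective (g' y)
    obtain ⟨x, rfl⟩ := S.epi.surjective z
    obtain ⟨l', hl'⟩ := S'.exists_apply_eq_sub hg hz
    obtain ⟨l, rfl⟩ := hα.surjective l'
    exact ⟨x + f l, apply_add_of_apply_eq_sub hf hl'⟩
  map_mem := hβ _ _
  exists_mem {d y} hy := by
    obtain ⟨z, hzd, hz⟩ := hγ.exists_mem (S'.epi.map_mem hy)
    obtain ⟨x, hx, rfl⟩ := S.epi.exists_mem hzd
    obtain ⟨l', hl'⟩ := S'.exists_apply_eq_sub hg hz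
    obtain ⟨l, hl, rfl⟩ := hα.exists_mem (S'.mem_iff.1 (hl' ▸ sub_mem hy (hβ d x hx)))
    exact ⟨x + f l, add_mem hx (S.mem_iff.2 hl), apply_add_of_apply_eq_sub hf hl'⟩

theorem IsGradedShortExact.ker (S : IsGradedShortExact ℒ ℳ 𝒩 f g)
    (S' : IsGradedShortExact ℒ' ℳ' 𝒩' f' g') (hf : β ∘ₗ f = f' ∘ₗ α) (hg : γ ∘ₗ g = g' ∘ₗ β)
    (hα : IsGradedEpi ℒ ℒ' α) (hβ : ∀ d, ∀ x ∈ ℳ d, β x ∈ ℳ' d) :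
    IsGradedShortExact (subGrading ℒ (LinearMap.ker α)) (subGrading ℳ (LinearMap.ker β))
      (subGrading 𝒩 (LinearMap.ker γ)) (kerMap α β f f' hf) (kerMap β γ g g' hg) where
  injective x y hxy := Subtype.ext (S.injective (congrArg Subtype.val hxy))
  exact := by
    rintro ⟨y, hy : β y = 0⟩
    refine Subtype.ext_iff.trans ((S.exact y).trans ⟨?_, ?_⟩)
    · rintro ⟨x, rfl⟩
      refine ⟨⟨x, S'.injective ?_⟩, rfl⟩
      rw [map_zero, ← hy]
      exact (LinearMap.congr_fun hf x).symm
    · rintro ⟨x, hx⟩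
      exact ⟨x, congrArg Subtype.val hx⟩
  mem_iff := S.mem_iff
  epi :=
    { surjective := by
        rintro ⟨z, hz : γ z = 0⟩
        obtain ⟨y, rfl⟩ := S.epi.surjective z
        obtain ⟨m', hm'⟩ := (S'.exact (β y)).1 ((LinearMap.congr_fun hg y).symm.trans hz)
        obtain ⟨m, rfl⟩ := hα.surjective m'
        exact ⟨⟨y - f m, sub_mem_ker hf hm'⟩, Subtype.ext (S.apply_sub y m)⟩
      map_mem := S.epi.map_mem
      exists_mem := by
        rintro d ⟨z, hz : γ z = 0⟩ (hzd : z ∈ 𝒩 d)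
        obtain ⟨y, hyd, rfl⟩ := S.epi.exists_mem hzd
        obtain ⟨m', hm'⟩ := (S'.exact (β y)).1 ((LinearMap.congr_fun hg y).symm.trans hz)
        obtain ⟨m, hmd, rfl⟩ := hα.exists_mem (S'.mem_iff.1 (hm' ▸ hβ d y hyd))
        exact ⟨⟨y - f m, sub_mem_ker hf hm'⟩, sub_mem hyd (S.mem_iff.2 hmd),
          Subtype.ext (S.apply_sub y m)⟩ }

theorem IsGradedEpi.ker_comp {φ : M' →ₗ[R] M} (hφ : IsGradedEpi ℳ' ℳ φ) (g : M →ₗ[R] N) :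
    IsGradedShortExact (subGrading ℳ' (LinearMap.ker φ)) (subGrading ℳ' (LinearMap.ker (g ∘ₗ φ)))
      (subGrading ℳ (LinearMap.ker g))
      (kerMap φ (g ∘ₗ φ) LinearMap.id g rfl) (kerMap (g ∘ₗ φ) g φ LinearMap.id rfl) where
  injective _ _ hxy := Subtype.ext (congrArg (LinearMap.ker (g ∘ₗ φ)).subtype hxy)
  exact := by
    rintro ⟨x, hx⟩
    refine Subtype.ext_iff.trans ⟨fun h => ⟨⟨x, h⟩, rfl⟩, ?_⟩
    rintro ⟨y, hy⟩
    rw [← hy]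
    exact y.2
  mem_iff := Iff.rfl
  epi :=
    { surjective := by
        rintro ⟨y, hy⟩
        obtain ⟨x, rfl⟩ := hφ.surjective y
        exact ⟨⟨x, hy⟩, rfl⟩
      map_mem := hφ.map_mem
      exists_mem := by
        rintro d ⟨y, hy⟩ hyd
        obtain ⟨x, hxd, rfl⟩ := hφ.exists_mem hyd
        exact ⟨⟨x, hy⟩, hxd, rfl⟩ }

end Snake

end GradedModules

section FreeResolutions

universe u

variable {R : Type u} [CommRing R] {S : Type*} [SetLike S R] [AddSubgroupClass S R] (𝒜 : ℤ → S)

/-- The grading of the free module `⨁ⱼ R(-Dⱼ)`, whose `j`-th basis vector has degree `Dⱼ`. -/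
def twistedGrading {ι : Type*} (D : ι → ℤ) (d : ℤ) : AddSubgroup (ι → R) :=
  AddSubgroup.pi Set.univ fun j => AddSubgroup.ofClass (𝒜 (d - D j))

variable {𝒜} {ι κ : Type*} {D : ι → ℤ}

theorem mem_twistedGrading {d : ℤ} {w : ι → R} :
    w ∈ twistedGrading 𝒜 D d ↔ ∀ j, w j ∈ 𝒜 (d - D j) := by
  simp only [twistedGrading, AddSubgroup.mem_pi, Set.mem_univ, forall_const]
  rfl

theorem twistedGrading_add (e d : ℤ) :
    twistedGrading 𝒜 (fun j => D j + e) d = twistedGrading 𝒜 D (d - e) := by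
  ext w
  simp only [mem_twistedGrading, sub_add_eq_sub_sub_swap]

theorem single_mem_twistedGrading [DecidableEq ι] [SetLike.GradedOne 𝒜] (j : ι) :
    Pi.single j 1 ∈ twistedGrading 𝒜 D (D j) := by
  refine mem_twistedGrading.2 fun i => ?_
  obtain rfl | hij := eq_or_ne i j
  · simpa using SetLike.GradedOne.one_mem (A := 𝒜)
  · rw [Pi.single_eq_of_ne hij]
    exact zero_mem _

instance [SetLike.GradedMul 𝒜] : SetLike.GradedSMul 𝒜 (twistedGrading 𝒜 D) where
  smul_mem {i d a w} ha hw := mem_twistedGrading.2 fun j => by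
    rw [vadd_eq_add, add_sub_assoc]
    exact SetLike.GradedMul.mul_mem ha (mem_twistedGrading.1 hw j)

instance {M : Type*} [AddCommGroup M] [Module R M] (ℳ : ℤ → AddSubgroup M) (K : Submodule R M)
    [SetLike.GradedSMul 𝒜 ℳ] : SetLike.GradedSMul 𝒜 (subGrading ℳ K) where
  smul_mem {_ _ _ _} ha hx := (SetLike.GradedSMul.smul_mem ha (mem_subGrading.1 hx) :)

section Lifting

variable {M N : Type*} [AddCommGroup M] [AddCommGroup N] [Module R M] [Module R N]
  {ℳ : ℤ → AddSubgroup M} {𝒩 : ℤ → AddSubgroup N}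

theorem linearCombination_mem [Fintype ι] [SetLike.GradedSMul 𝒜 ℳ] {v : ι → M}
    (hv : ∀ j, v j ∈ ℳ (D j)) {d : ℤ} {w : ι → R} (hw : w ∈ twistedGrading 𝒜 D d) :
    Fintype.linearCombination R v w ∈ ℳ d := by
  rw [Fintype.linearCombination_apply]
  refine sum_mem fun j _ => ?_
  simpa only [vadd_eq_add, sub_add_cancel] using
    SetLike.GradedSMul.smul_mem (mem_twistedGrading.1 hw j) (hv j)

theorem IsGradedEpi.exists_lift [Finite ι] [SetLike.GradedOne 𝒜] [SetLike.GradedSMul 𝒜 ℳ]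
    {g : M →ₗ[R] N} (hg : IsGradedEpi ℳ 𝒩 g) {φ : (ι → R) →ₗ[R] N}
    (hφ : ∀ d, ∀ w ∈ twistedGrading 𝒜 D d, φ w ∈ 𝒩 d) :
    ∃ ψ : (ι → R) →ₗ[R] M, (∀ d, ∀ w ∈ twistedGrading 𝒜 D d, ψ w ∈ ℳ d) ∧ g ∘ₗ ψ = φ := by
  classical
  cases nonempty_fintype ι
  choose v hv hgv using fun j => hg.exists_mem (hφ _ _ (single_mem_twistedGrading (𝒜 := 𝒜) j))
  refine ⟨Fintype.linearCombination R v, fun d w => linearCombination_mem hv, ?_⟩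
  refine LinearMap.pi_ext' fun j => LinearMap.ext_ring ?_
  simp [hgv]

end Lifting

variable (R ι κ) in
/-- The inclusion of the free module on `ι` into the one on `ι ⊕ κ`. -/
def sumInl : (ι → R) →ₗ[R] (ι ⊕ κ → R) :=
  (LinearEquiv.sumArrowLequivProdArrow ι κ R R).symm.toLinearMap ∘ₗ LinearMap.inl R _ _

variable (R ι κ) in
/-- The projection of the free module on `ι ⊕ κ` onto the one on `κ`. -/
def sumSnd : (ι ⊕ κ → R) →ₗ[R] (κ → R) :=
  LinearMap.funLeft R R Sum.inr

theorem isGradedShortExact_sumElim (D₁ : ι → ℤ) (D₂ : κ → ℤ) :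
    IsGradedShortExact (twistedGrading 𝒜 D₁) (twistedGrading 𝒜 (Sum.elim D₁ D₂))
      (twistedGrading 𝒜 D₂) (sumInl R ι κ) (sumSnd R ι κ) where
  injective v w hvw := funext fun j => congrFun hvw (Sum.inl j)
  exact w := by
    constructor
    · intro hw
      refine ⟨w ∘ Sum.inl, funext ?_⟩
      rintro (j | j)
      · rfl
      · exact (congrFun hw j).symm
    · rintro ⟨v, rfl⟩
      rfl
  mem_iff {d w} := by
    rw [mem_twistedGrading, mem_twistedGrading, Sum.forall]
    exact and_iff_left fun j => zero_mem _
  epi :=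
    { surjective := LinearMap.funLeft_surjective_of_injective _ _ _ Sum.inr_injective
      map_mem hw := mem_twistedGrading.2 fun j => mem_twistedGrading.1 hw (Sum.inr j)
      exists_mem {d w} hw := ⟨Sum.elim 0 w,
        mem_twistedGrading.2 (Sum.rec (fun _ => zero_mem _) (mem_twistedGrading.1 hw)), rfl⟩ }

theorem IsGradedShortExact.exists_cover_middle {L M N : Type*} [AddCommGroup L] [AddCommGroup M]
    [AddCommGroup N] [Module R L] [Module R M] [Module R N] {ℒ : ℤ → AddSubgroup L}
    {ℳ : ℤ → AddSubgroup M} {𝒩 : ℤ → AddSubgroup N} {f : L →ₗ[R] M} {g : M →ₗ[R] N}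
    [Finite κ] [SetLike.GradedOne 𝒜] [SetLike.GradedSMul 𝒜 ℳ]
    (hS : IsGradedShortExact ℒ ℳ 𝒩 f g) {D₁ : ι → ℤ} {D₂ : κ → ℤ} {φ : (ι → R) →ₗ[R] L}
    {χ : (κ → R) →ₗ[R] N} (hφ : IsGradedEpi (twistedGrading 𝒜 D₁) ℒ φ)
    (hχ : IsGradedEpi (twistedGrading 𝒜 D₂) 𝒩 χ) :
    ∃ θ : (ι ⊕ κ → R) →ₗ[R] M, IsGradedEpi (twistedGrading 𝒜 (Sum.elim D₁ D₂)) ℳ θ ∧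
      ∃ (i : LinearMap.ker φ →ₗ[R] LinearMap.ker θ) (p : LinearMap.ker θ →ₗ[R] LinearMap.ker χ),
        IsGradedShortExact (subGrading (twistedGrading 𝒜 D₁) (LinearMap.ker φ))
        (subGrading (twistedGrading 𝒜 (Sum.elim D₁ D₂)) (LinearMap.ker θ))
        (subGrading (twistedGrading 𝒜 D₂) (LinearMap.ker χ)) i p := by
  obtain ⟨ψ, hψ, hgψ⟩ := hS.epi.exists_lift (𝒜 := 𝒜) fun d w hw => hχ.map_mem hw
  let θ : (ι ⊕ κ → R) →ₗ[R] M := f ∘ₗ φ ∘ₗ LinearMap.funLeft R R Sum.inl + ψ ∘ₗ sumSnd R ι κ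
  have hθ : ∀ d, ∀ w ∈ twistedGrading 𝒜 (Sum.elim D₁ D₂) d, θ w ∈ ℳ d := fun d w hw =>
    add_mem
      (hS.mem_iff.2 <| hφ.map_mem <|
        mem_twistedGrading.2 fun j => mem_twistedGrading.1 hw (Sum.inl j))
      (hψ d _ <| mem_twistedGrading.2 fun j => mem_twistedGrading.1 hw (Sum.inr j))
  have hleft : θ ∘ₗ sumInl R ι κ = f ∘ₗ φ := LinearMap.ext fun w =>
    (congrArg (f (φ w) + ·) (map_zero ψ)).trans (add_zero _)
  have hright : χ ∘ₗ sumSnd R ι κ = g ∘ₗ θ := LinearMap.ext fun w => by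
    rw [LinearMap.comp_apply g, LinearMap.add_apply, map_add]
    exact ((zero_add _).symm.trans
      (congrArg₂ _ (hS.exact.apply_apply_eq_zero _).symm (LinearMap.congr_fun hgψ _).symm))
  exact ⟨θ, (isGradedShortExact_sumElim D₁ D₂).epi_middle hS hleft hright hφ hχ hθ, _, _,
    (isGradedShortExact_sumElim D₁ D₂).ker hS hleft hright hφ hθ⟩

variable (𝒜) in
/-- A graded module has a graded free resolution of length less than `l` whose twists in
homological degree `i` are at most `r + i`. The recursion passes to the kernel of a cover by a
free module, which is where the resolution continues. -/
def HasFreeResolution : ℕ → ℤ → ∀ {M : Type u} [AddCommGroup M] [Module R M],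
    (ℤ → AddSubgroup M) → Prop
  | 0, _, M, _, _, _ => Subsingleton M
  | l + 1, r, M, _, _, ℳ =>
    ∃ (ι : Type) (_ : Fintype ι) (D : ι → ℤ) (φ : (ι → R) →ₗ[R] M), (∀ j, D j ≤ r) ∧
      IsGradedEpi (twistedGrading 𝒜 D) ℳ φ ∧
      HasFreeResolution l (r + 1) (subGrading (twistedGrading 𝒜 D) (LinearMap.ker φ))

namespace HasFreeResolution

variable {L M N : Type u} [AddCommGroup L] [AddCommGroup M] [AddCommGroup N] [Module R L]
  [Module R M] [Module R N] {ℒ : ℤ → AddSubgroup L} {ℳ : ℤ → AddSubgroup M}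
  {𝒩 : ℤ → AddSubgroup N} {f : L →ₗ[R] M} {g : M →ₗ[R] N} {l l' : ℕ} {r r' : ℤ}

theorem mono_twist (h : HasFreeResolution 𝒜 l r ℳ) (hr : r ≤ r') :
    HasFreeResolution 𝒜 l r' ℳ := by
  induction l generalizing r r' M with
  | zero => exact h
  | succ l ih =>
    obtain ⟨ι, _, D, φ, hD, hφ, hker⟩ := h
    exact ⟨ι, ‹_›, D, φ, fun j => (hD j).trans hr, hφ, ih hker (Int.add_le_add_right hr 1)⟩

theorem of_subsingleton [Subsingleton M] : HasFreeResolution 𝒜 l r ℳ := by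
  induction l generalizing r M with
  | zero => exact ‹_›
  | succ l ih =>
    exact ⟨Empty, inferInstance, Empty.elim, 0, Empty.rec, ⟨fun x => ⟨0, Subsingleton.elim _ _⟩,
      fun _ => zero_mem _, fun _ => ⟨0, zero_mem _, Subsingleton.elim _ _⟩⟩, ih⟩

theorem mono_length (h : HasFreeResolution 𝒜 l r ℳ) (hl : l ≤ l') :
    HasFreeResolution 𝒜 l' r ℳ := by
  induction l generalizing l' r M with
  | zero =>
    have : Subsingleton M := h
    exact of_subsingleton
  | succ l ih =>
    obtain ⟨ι, _, D, φ, hD, hφ, hker⟩ := h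
    obtain ⟨l', rfl⟩ := Nat.exists_eq_succ_of_ne_zero (Nat.ne_zero_of_lt hl)
    exact ⟨ι, ‹_›, D, φ, hD, hφ, ih hker (Nat.le_of_succ_le_succ hl)⟩

theorem shift (h : HasFreeResolution 𝒜 l r ℳ) (e : ℤ) :
    HasFreeResolution 𝒜 l (r + e) fun d => ℳ (d - e) := by
  induction l generalizing r M with
  | zero => exact h
  | succ l ih =>
    obtain ⟨ι, _, D, φ, hD, hφ, hker⟩ := h
    have hgrading : twistedGrading 𝒜 (fun j => D j + e) = fun d => twistedGrading 𝒜 D (d - e) :=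
      funext (twistedGrading_add e)
    refine ⟨ι, ‹_›, fun j => D j + e, φ, fun j => Int.add_le_add_right (hD j) e, ?_, ?_⟩
    · rw [hgrading]
      exact ⟨hφ.surjective, hφ.map_mem, hφ.exists_mem⟩
    · rw [hgrading, add_right_comm]
      exact ih hker

theorem of_equiv (h : HasFreeResolution 𝒜 l r ℳ) (e : M ≃ₗ[R] N)
    (he : ∀ d x, e x ∈ 𝒩 d ↔ x ∈ ℳ d) : HasFreeResolution 𝒜 l r 𝒩 := by
  cases l with
  | zero =>
    have : Subsingleton M := h
    exact e.symm.toEquiv.subsingleton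
  | succ l =>
    obtain ⟨ι, _, D, φ, hD, hφ, hker⟩ := h
    refine ⟨ι, ‹_›, D, e.toLinearMap ∘ₗ φ, hD, (isGradedEpi_of_equiv e he).comp hφ, ?_⟩
    rwa [LinearEquiv.ker_comp]

theorem horseshoe [SetLike.GradedMonoid 𝒜] [SetLike.GradedSMul 𝒜 ℳ]
    (hS : IsGradedShortExact ℒ ℳ 𝒩 f g) (hL : HasFreeResolution 𝒜 l r ℒ)
    (hN : HasFreeResolution 𝒜 l r 𝒩) : HasFreeResolution 𝒜 l r ℳ := by
  induction l generalizing r L M N with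
  | zero =>
    have : Subsingleton L := hL
    have : Subsingleton N := hN
    refine subsingleton_of_forall_eq 0 fun x => ?_
    obtain ⟨y, rfl⟩ := (hS.exact x).1 (Subsingleton.elim _ _)
    rw [Subsingleton.elim y 0, map_zero]
  | succ l ih =>
    obtain ⟨ι, _, D₁, φ, hD₁, hφ, hkerφ⟩ := hL
    obtain ⟨κ, _, D₂, χ, hD₂, hχ, hkerχ⟩ := hN
    obtain ⟨θ, hθ, i, p, hkerθ⟩ := hS.exists_cover_middle hφ hχ
    exact ⟨ι ⊕ κ, inferInstance, Sum.elim D₁ D₂, θ, Sum.rec hD₁ hD₂, hθ, ih hkerθ hkerφ hkerχ⟩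

theorem mapping_cone [SetLike.GradedMonoid 𝒜] (hS : IsGradedShortExact ℒ ℳ 𝒩 f g)
    (hL : HasFreeResolution 𝒜 l (r + 1) ℒ) (hM : HasFreeResolution 𝒜 l r ℳ) :
    HasFreeResolution 𝒜 (l + 1) r 𝒩 := by
  obtain ⟨ι, _, D, φ, hD, hφ, hker⟩ := hM.mono_length l.le_succ
  have hkerg : HasFreeResolution 𝒜 l (r + 1) (subGrading ℳ (LinearMap.ker g)) :=
    hL.of_equiv ((LinearEquiv.ofInjective f hS.injective).trans
      (LinearEquiv.ofEq _ _ hS.exact.linearMap_ker_eq.symm)) fun _ _ => hS.mem_iff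
  exact ⟨ι, ‹_›, D, g ∘ₗ φ, hD, hS.epi.comp hφ, horseshoe (hφ.ker_comp g) hker hkerg⟩

end HasFreeResolution

section Regularity

variable {L M N : Type u} [AddCommGroup L] [AddCommGroup M] [AddCommGroup N] [Module R L]
  [Module R M] [Module R N] {ℒ : ℤ → AddSubgroup L} {ℳ : ℤ → AddSubgroup M}
  {𝒩 : ℤ → AddSubgroup N} {f : L →ₗ[R] M} {g : M →ₗ[R] N} {r r' : ℤ}

variable (𝒜) in
/-- The Castelnuovo–Mumford regularity of a graded module is at most `r`: it has a finite graded
free resolution whose `i`-th twists are at most `r + i`. -/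
def RegularityLE (ℳ : ℤ → AddSubgroup M) (r : ℤ) : Prop :=
  ∃ l, HasFreeResolution 𝒜 l r ℳ

theorem RegularityLE.mono (h : RegularityLE 𝒜 ℳ r) (hr : r ≤ r') : RegularityLE 𝒜 ℳ r' :=
  h.imp fun _ hl => hl.mono_twist hr

theorem RegularityLE.shift (h : RegularityLE 𝒜 ℳ r) (e : ℤ) :
    RegularityLE 𝒜 (fun d => ℳ (d - e)) (r + e) :=
  h.imp fun _ hl => hl.shift e

theorem RegularityLE.of_subsingleton [Subsingleton M] : RegularityLE 𝒜 ℳ r :=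
  ⟨0, ‹_›⟩

theorem IsGradedShortExact.regularityLE_middle [SetLike.GradedMonoid 𝒜] [SetLike.GradedSMul 𝒜 ℳ]
    (hS : IsGradedShortExact ℒ ℳ 𝒩 f g) (hL : RegularityLE 𝒜 ℒ r) (hN : RegularityLE 𝒜 𝒩 r) :
    RegularityLE 𝒜 ℳ r := by
  obtain ⟨l, hl⟩ := hL
  obtain ⟨m, hm⟩ := hN
  exact ⟨max l m, .horseshoe hS (hl.mono_length (le_max_left l m))
    (hm.mono_length (le_max_right l m))⟩

theorem IsGradedShortExact.regularityLE_right [SetLike.GradedMonoid 𝒜]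
    (hS : IsGradedShortExact ℒ ℳ 𝒩 f g) (hL : RegularityLE 𝒜 ℒ (r + 1))
    (hM : RegularityLE 𝒜 ℳ r) : RegularityLE 𝒜 𝒩 r := by
  obtain ⟨l, hl⟩ := hL
  obtain ⟨m, hm⟩ := hM
  exact ⟨max l m + 1, .mapping_cone hS (hl.mono_length (le_max_left l m))
    (hm.mono_length (le_max_right l m))⟩

end Regularity

section MatrixResolutions

variable {M : Type*} [AddCommGroup M] [Module R M] {ℳ : ℤ → AddSubgroup M}

variable (𝒜) in
/-- A graded free resolution of a graded module, with the differentials written as matrices with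
homogeneous entries. It is allowed to be infinite. -/
structure MatrixResolution (ℳ : ℤ → AddSubgroup M) where
  rank : ℕ → ℕ
  twist : (i : ℕ) → Fin (rank i) → ℤ
  diff : (i : ℕ) → Matrix (Fin (rank i)) (Fin (rank (i + 1))) R
  aug : (Fin (rank 0) → R) →ₗ[R] M
  aug_mem : ∀ j, aug (Pi.single j 1) ∈ ℳ (twist 0 j)
  diff_mem : ∀ i j k, diff i j k ∈ 𝒜 (twist (i + 1) k - twist i j)
  aug_surjective : Function.Surjective aug
  exact_aug : Function.Exact (diff 0).mulVec aug
  exact_diff : ∀ i, Function.Exact (diff (i + 1)).mulVec (diff i).mulVec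

namespace MatrixResolution

/-- The zero resolution of the zero module. -/
def zero [Subsingleton M] : MatrixResolution 𝒜 ℳ where
  rank _ := 0
  twist _ := Fin.elim0
  diff _ := 0
  aug := 0
  aug_mem j := j.elim0
  diff_mem _ j := j.elim0
  aug_surjective _ := ⟨0, Subsingleton.elim _ _⟩
  exact_aug _ := ⟨fun _ => ⟨0, Subsingleton.elim _ _⟩, fun _ => rfl⟩
  exact_diff _ _ := ⟨fun _ => ⟨0, Subsingleton.elim _ _⟩, fun _ => Subsingleton.elim _ _⟩

/-- The resolution obtained by splicing a cover by a free module with a resolution of its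
kernel. -/
noncomputable def cons [SetLike.GradedOne 𝒜] {b : ℕ} {D : Fin b → ℤ} {φ : (Fin b → R) →ₗ[R] M}
    (hφ : IsGradedEpi (twistedGrading 𝒜 D) ℳ φ)
    (F : MatrixResolution 𝒜 (subGrading (twistedGrading 𝒜 D) (LinearMap.ker φ))) :
    MatrixResolution 𝒜 ℳ where
  rank
    | 0 => b
    | i + 1 => F.rank i
  twist
    | 0 => D
    | i + 1 => F.twist i
  diff
    | 0 => LinearMap.toMatrix' ((LinearMap.ker φ).subtype ∘ₗ F.aug)
    | i + 1 => F.diff i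
  aug := φ
  aug_mem j := hφ.map_mem (single_mem_twistedGrading j)
  diff_mem
    | 0, j, k => by
      simpa [LinearMap.toMatrix'_apply] using mem_twistedGrading.1 (F.aug_mem k) j
    | i + 1, j, k => F.diff_mem i j k
  aug_surjective := hφ.surjective
  exact_aug := by
    change Function.Exact (LinearMap.toMatrix' _).mulVec φ
    rw [_root_.funext (LinearMap.toMatrix'_mulVec _), LinearMap.coe_comp]
    exact F.aug_surjective.comp_exact_iff_exact.2 (LinearMap.exact_subtype_ker_map φ)
  exact_diff
    | 0 => by
      change Function.Exact (F.diff 0).mulVec (LinearMap.toMatrix' _).mulVec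
      rw [_root_.funext (LinearMap.toMatrix'_mulVec _), LinearMap.coe_comp]
      exact ((LinearMap.ker φ).injective_subtype.comp_exact_iff_exact
        (f := (F.diff 0).mulVecLin)).2 F.exact_aug
    | i + 1 => F.exact_diff i

end MatrixResolution

end MatrixResolutions

theorem HasFreeResolution.exists_fin_cover {M : Type u} [AddCommGroup M] [Module R M]
    {ℳ : ℤ → AddSubgroup M} {l : ℕ} {r : ℤ} (h : HasFreeResolution 𝒜 (l + 1) r ℳ) :
    ∃ (b : ℕ) (D : Fin b → ℤ) (φ : (Fin b → R) →ₗ[R] M), (∀ j, D j ≤ r) ∧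
      IsGradedEpi (twistedGrading 𝒜 D) ℳ φ ∧
      HasFreeResolution 𝒜 l (r + 1) (subGrading (twistedGrading 𝒜 D) (LinearMap.ker φ)) := by
  obtain ⟨ι, _, D, φ, hD, hφ, hker⟩ := h
  let e := Fintype.equivFin ι
  let E : (Fin (Fintype.card ι) → R) ≃ₗ[R] (ι → R) := LinearEquiv.funCongrLeft R R e
  have hE : ∀ d w, E w ∈ twistedGrading 𝒜 D d ↔ w ∈ twistedGrading 𝒜 (D ∘ e.symm) d := by
    intro d w
    simp only [mem_twistedGrading]
    exact e.forall_congr fun j => by simp [E, e.symm_apply_apply]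
  refine ⟨_, D ∘ e.symm, φ ∘ₗ E.toLinearMap, fun j => hD _, hφ.comp (isGradedEpi_of_equiv E hE),
    hker.of_equiv (E.ofSubmodule' (LinearMap.ker φ)).symm fun d x => ?_⟩
  rw [mem_subGrading, mem_subGrading, ← hE]
  exact iff_of_eq (congrArg (fun y => y ∈ _)
    (congrArg Subtype.val ((E.ofSubmodule' (LinearMap.ker φ)).apply_symm_apply x)))

theorem HasFreeResolution.exists_matrixResolution [SetLike.GradedOne 𝒜] {M : Type u}
    [AddCommGroup M] [Module R M] {ℳ : ℤ → AddSubgroup M} {l : ℕ} {r : ℤ}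
    (h : HasFreeResolution 𝒜 l r ℳ) :
    ∃ F : MatrixResolution 𝒜 ℳ, (∀ i, l ≤ i → F.rank i = 0) ∧ ∀ i j, F.twist i j ≤ r + i := by
  induction l generalizing r M with
  | zero =>
    have : Subsingleton M := h
    exact ⟨.zero, fun _ _ => rfl, fun _ j => j.elim0⟩
  | succ l ih =>
    obtain ⟨b, D, φ, hD, hφ, hker⟩ := h.exists_fin_cover
    obtain ⟨F, hrank, htwist⟩ := ih hker
    refine ⟨.cons hφ F, ?_, ?_⟩
    · rintro (_ | i) hi
      · exact absurd hi l.not_succ_le_zero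
      · exact hrank i (Nat.le_of_succ_le_succ hi)
    · rintro (_ | i) j
      · exact (hD j).trans_eq (add_zero r).symm
      · refine (htwist i j).trans_eq ?_
        push_cast
        ring

end FreeResolutions

section HomogeneousElements

universe u

variable {R : Type u} [CommRing R] {S : Type*} [SetLike S R] [AddSubgroupClass S R] {𝒜 : ℤ → S}
  {I : Ideal R} {r : ℤ}

variable (𝒜) in
/-- The grading of `R ⧸ I` by the images of the homogeneous components of `R`. -/
def quotientGrading (I : Ideal R) (d : ℤ) : AddSubgroup (R ⧸ I) :=
  (AddSubgroup.ofClass (𝒜 d)).map (Submodule.mkQ I).toAddMonoidHom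

theorem mem_quotientGrading {d : ℤ} {y : R ⧸ I} :
    y ∈ quotientGrading 𝒜 I d ↔ ∃ p ∈ 𝒜 d, Submodule.Quotient.mk p = y :=
  Iff.rfl

instance [SetLike.GradedMul 𝒜] : SetLike.GradedSMul 𝒜 (quotientGrading 𝒜 I) where
  smul_mem := by
    rintro _ _ a _ ha ⟨p, hp, rfl⟩
    exact ⟨a * p, SetLike.GradedMul.mul_mem ha hp, rfl⟩

theorem regularityLE_quotient_bot : RegularityLE 𝒜 (quotientGrading 𝒜 (⊥ : Ideal R)) 0 := by
  let e : (Unit → R) ≃ₗ[R] R ⧸ (⊥ : Ideal R) :=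
    (LinearEquiv.funUnique Unit R R).trans (Submodule.quotEquivOfEqBot ⊥ rfl).symm
  have he : ∀ d w, e w ∈ quotientGrading 𝒜 ⊥ d ↔ w ∈ twistedGrading 𝒜 (fun _ => 0) d := by
    intro d w
    rw [mem_twistedGrading, Unique.forall_iff, sub_zero, mem_quotientGrading]
    refine ⟨?_, fun hw => ⟨_, hw, rfl⟩⟩
    rintro ⟨p, hp, hpw⟩
    obtain rfl : p = w () := (Submodule.quotEquivOfEqBot (⊥ : Ideal R) rfl).symm.injective hpw
    exact hp
  refine ⟨1, Unit, inferInstance, fun _ => 0, e.toLinearMap, fun _ => le_rfl,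
    isGradedEpi_of_equiv e he, ?_⟩
  rw [LinearEquiv.ker]
  exact HasFreeResolution.of_subsingleton

/-- Multiplication by `x`, as a map `R ⧸ (I : x) → R ⧸ I`. -/
def colonMulMap (I : Ideal R) (x : R) : R ⧸ I.colon {x} →ₗ[R] R ⧸ I :=
  Submodule.mapQ _ _ (LinearMap.toSpanSingleton R R x) fun _ => Submodule.mem_colon_singleton.1

variable {x : R} {e : ℤ} [GradedRing 𝒜]

theorem colonMulMap_mem_iff (hI : I.IsHomogeneous 𝒜) (hx : x ∈ 𝒜 e) {d : ℤ}
    {y : R ⧸ I.colon {x}} :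
    colonMulMap I x y ∈ quotientGrading 𝒜 I d ↔ y ∈ quotientGrading 𝒜 (I.colon {x}) (d - e) := by
  obtain ⟨p, rfl⟩ := Submodule.Quotient.mk_surjective _ y
  constructor
  · rintro ⟨q, hq, hqp⟩
    refine ⟨DirectSum.decompose 𝒜 p (d - e), SetLike.coe_mem _, ?_⟩
    have hmem : q - p * x ∈ I := (Submodule.Quotient.eq I).1 hqp
    have hcomp : (DirectSum.decompose 𝒜 (q - p * x) d : R) =
        q - DirectSum.decompose 𝒜 p (d - e) * x := by
      rw [DirectSum.decompose_sub, DirectSum.sub_apply, AddSubgroupClass.coe_sub,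
        DirectSum.decompose_of_mem_same 𝒜 hq,
        ← DirectSum.coe_decompose_mul_add_of_right_mem 𝒜 hx, sub_add_cancel]
    have hmem' : q - DirectSum.decompose 𝒜 p (d - e) * x ∈ I := hcomp ▸ hI d hmem
    refine (Submodule.Quotient.eq _).2 (Submodule.mem_colon_singleton.2 ?_)
    rw [smul_eq_mul, sub_mul]
    simpa using sub_mem hmem hmem'
  · rintro ⟨q, hq, hqp⟩
    rw [← hqp]
    refine ⟨q * x, ?_, rfl⟩
    have hqx : q * x ∈ 𝒜 (d - e + e) := SetLike.GradedMul.mul_mem hq hx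
    rwa [sub_add_cancel] at hqx

theorem isGradedShortExact_colonMulMap (hI : I.IsHomogeneous 𝒜) (hx : x ∈ 𝒜 e) :
    IsGradedShortExact (fun d => quotientGrading 𝒜 (I.colon {x}) (d - e)) (quotientGrading 𝒜 I)
      (quotientGrading 𝒜 (I ⊔ Ideal.span {x})) (colonMulMap I x)
      (Submodule.factor le_sup_left) where
  injective := LinearMap.ker_eq_bot.1 <| Submodule.ker_liftQ_eq_bot _ _ _ fun p hp =>
    Submodule.mem_colon_singleton.2 ((Submodule.Quotient.mk_eq_zero I).1 hp)
  exact := by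
    intro y
    obtain ⟨p, rfl⟩ := Submodule.Quotient.mk_surjective _ y
    change (Submodule.Quotient.mk p : R ⧸ I ⊔ Ideal.span {x}) = 0 ↔ _
    rw [Submodule.Quotient.mk_eq_zero]
    constructor
    · intro hp
      obtain ⟨a, ha, b, hb, rfl⟩ := Submodule.mem_sup.1 hp
      obtain ⟨q, rfl⟩ := Ideal.mem_span_singleton'.1 hb
      exact ⟨Submodule.Quotient.mk q, (Submodule.Quotient.eq I).2 (by simpa using ha)⟩
    · rintro ⟨z, hz⟩
      obtain ⟨q, rfl⟩ := Submodule.Quotient.mk_surjective _ z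
      have hqp : q * x - p ∈ I := (Submodule.Quotient.eq I).1 hz
      rw [← sub_sub_cancel (q * x) p]
      exact sub_mem (Submodule.mem_sup_right (Ideal.mem_span_singleton'.2 ⟨q, rfl⟩))
        (Submodule.mem_sup_left hqp)
  mem_iff := colonMulMap_mem_iff hI hx
  epi :=
    { surjective := Submodule.factor_surjective _
      map_mem := by
        rintro d _ ⟨p, hp, rfl⟩
        exact ⟨p, hp, rfl⟩
      exists_mem := by
        rintro d _ ⟨p, hp, rfl⟩
        exact ⟨Submodule.Quotient.mk p, ⟨p, hp, rfl⟩, rfl⟩ }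

theorem regularityLE_quotient_of_colon_of_sup (hI : I.IsHomogeneous 𝒜) (hx : x ∈ 𝒜 e)
    (hcolon : RegularityLE 𝒜 (quotientGrading 𝒜 (I.colon {x})) (r - e))
    (hsup : RegularityLE 𝒜 (quotientGrading 𝒜 (I ⊔ Ideal.span {x})) r) :
    RegularityLE 𝒜 (quotientGrading 𝒜 I) r := by
  refine (isGradedShortExact_colonMulMap hI hx).regularityLE_middle ?_ hsup
  simpa using hcolon.shift e

theorem regularityLE_quotient_sup (hI : I.IsHomogeneous 𝒜) (hx : x ∈ 𝒜 e)
    (hcolon : RegularityLE 𝒜 (quotientGrading 𝒜 (I.colon {x})) (r + 1 - e))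
    (h : RegularityLE 𝒜 (quotientGrading 𝒜 I) r) :
    RegularityLE 𝒜 (quotientGrading 𝒜 (I ⊔ Ideal.span {x})) r := by
  refine (isGradedShortExact_colonMulMap hI hx).regularityLE_right ?_ h
  simpa using hcolon.shift e

end HomogeneousElements

section MonomialIdeals

variable {σ : Type*} (k : Type*) [CommRing k]

/-- The standard grading of a polynomial ring, indexed by `ℤ` so that twists and shifts of graded
modules make sense; the components of negative degree are zero. -/
abbrev standardGrading (σ : Type*) (k : Type*) [CommRing k] : ℤ → Submodule k (MvPolynomial σ k) :=
  weightedHomogeneousSubmodule k (1 : σ → ℤ)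

noncomputable instance : GradedAlgebra (standardGrading σ k) :=
  weightedGradedAlgebra k 1

theorem weight_one_int (m : σ →₀ ℕ) : Finsupp.weight (1 : σ → ℤ) m = m.degree := by
  simp [Finsupp.weight_apply, Finsupp.sum, Finsupp.degree_apply]

theorem monomial_mem_standardGrading (m : σ →₀ ℕ) (a : k) :
    monomial m a ∈ standardGrading σ k m.degree :=
  isWeightedHomogeneous_monomial _ _ _ (weight_one_int m)

theorem X_mem_standardGrading (i : σ) : (X i : MvPolynomial σ k) ∈ standardGrading σ k 1 :=
  isWeightedHomogeneous_X k _ i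

/-- The monomial ideal generated by the monomials with exponents in `G`. -/
noncomputable def monomialIdeal (G : Finset (σ →₀ ℕ)) : Ideal (MvPolynomial σ k) :=
  Ideal.span ((fun m => monomial m (1 : k)) '' (G : Set (σ →₀ ℕ)))

variable {k} {G : Finset (σ →₀ ℕ)} {i : σ}

theorem mem_monomialIdeal {p : MvPolynomial σ k} :
    p ∈ monomialIdeal k G ↔ ∀ s ∈ p.support, ∃ m ∈ G, m ≤ s :=
  mem_ideal_span_monomial_image

theorem monomial_mem_monomialIdeal {m : σ →₀ ℕ} (hm : m ∈ G) :
    monomial m (1 : k) ∈ monomialIdeal k G :=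
  Ideal.subset_span ⟨m, hm, rfl⟩

theorem monomialIdeal_eq_top (h : 0 ∈ G) : monomialIdeal k G = ⊤ :=
  (Ideal.eq_top_iff_one _).2 (monomial_mem_monomialIdeal h)

theorem isHomogeneous_monomialIdeal : (monomialIdeal k G).IsHomogeneous (standardGrading σ k) := by
  refine Ideal.homogeneous_span _ _ ?_
  rintro _ ⟨m, -, rfl⟩
  exact ⟨m.degree, monomial_mem_standardGrading k m 1⟩

theorem height_monomialIdeal_le_card [Finite σ] [IsNoetherianRing k] (h : monomialIdeal k G ≠ ⊤) :
    (monomialIdeal k G).height ≤ G.card := by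
  refine (Ideal.height_le_spanFinrank _ h).trans (Nat.cast_le.2 ?_)
  refine (Submodule.spanFinrank_span_le_ncard_of_finite (G.finite_toSet.image _)).trans ?_
  exact (Set.ncard_image_le G.finite_toSet).trans (Set.ncard_coe_finset G).le

section Generators

variable [DecidableEq σ]

/-- Exponents of generators of the colon ideal `I : xᵢ`, where `I` is generated by the monomials
with exponents in `G`. -/
noncomputable def colonExponents (i : σ) (G : Finset (σ →₀ ℕ)) : Finset (σ →₀ ℕ) :=
  G.image (· - Finsupp.single i 1)

/-- Exponents of generators of the ideal `I + (xᵢ)`, where `I` is generated by the monomials with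
exponents in `G`. -/
noncomputable def addVarExponents (i : σ) (G : Finset (σ →₀ ℕ)) : Finset (σ →₀ ℕ) :=
  insert (Finsupp.single i 1) (G.filter (· i = 0))

theorem monomialIdeal_colonExponents :
    monomialIdeal k (colonExponents i G) = (monomialIdeal k G).colon {X i} := by
  ext p
  rw [Submodule.mem_colon_singleton, smul_eq_mul, mem_monomialIdeal, mem_monomialIdeal,
    support_mul_X]
  simp only [colonExponents, Finset.mem_map, forall_exists_index, and_imp,
    forall_apply_eq_imp_iff₂, Finset.exists_mem_image, addRightEmbedding_apply,
    tsub_le_iff_right]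

theorem monomialIdeal_addVarExponents :
    monomialIdeal k (addVarExponents i G) = monomialIdeal k G ⊔ Ideal.span {X i} := by
  have hX : (X i : MvPolynomial σ k) ∈ monomialIdeal k (addVarExponents i G) :=
    monomial_mem_monomialIdeal (Finset.mem_insert_self _ _)
  refine le_antisymm (Ideal.span_le.2 ?_) (sup_le (Ideal.span_le.2 ?_) ?_)
  · rintro _ ⟨m, hm, rfl⟩
    rcases Finset.mem_insert.1 hm with rfl | hm
    · exact Ideal.mem_sup_right (Ideal.mem_span_singleton_self _)
    · exact Ideal.mem_sup_left (monomial_mem_monomialIdeal (Finset.mem_filter.1 hm).1)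
  · rintro _ ⟨m, hm, rfl⟩
    by_cases hmi : m i = 0
    · exact monomial_mem_monomialIdeal
        (Finset.mem_insert_of_mem (Finset.mem_filter.2 ⟨hm, hmi⟩))
    · refine Ideal.mem_of_dvd _ ?_ hX
      exact X_dvd_monomial.2 (.inr hmi)
  · exact (Ideal.span_singleton_le_iff_mem _).2 hX

theorem sup_colonExponents_le :
    (colonExponents i G).sup id ≤ G.sup id - Finsupp.single i 1 := by
  rw [colonExponents, Finset.sup_image]
  exact Finset.sup_le fun m hm => tsub_le_tsub_right (Finset.le_sup (f := id) hm) _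

theorem sup_addVarExponents_le (hi : G.sup id i ≠ 0) :
    (addVarExponents i G).sup id ≤ G.sup id := by
  rw [addVarExponents, Finset.sup_insert]
  exact sup_le (Finsupp.single_le_iff.2 (Nat.one_le_iff_ne_zero.2 hi))
    (Finset.sup_mono (Finset.filter_subset _ _))

end Generators

theorem degree_tsub_single_add_one {s : σ →₀ ℕ} (hi : s i ≠ 0) :
    (s - Finsupp.single i 1).degree + 1 = s.degree := by
  conv_rhs => rw [← tsub_add_cancel_of_le
    (Finsupp.single_le_iff.2 (Nat.one_le_iff_ne_zero.2 hi))]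
  rw [map_add, Finsupp.degree_single]

theorem tsub_single_eq_self {m : σ →₀ ℕ} (hi : m i = 0) : m - Finsupp.single i 1 = m := by
  ext j
  rcases eq_or_ne j i with rfl | hji
  · simp [hi]
  · simp [hji]

theorem sup_apply_ne_zero {m : σ →₀ ℕ} (hm : m ∈ G) (hi : m i ≠ 0) : G.sup id i ≠ 0 :=
  ((Nat.pos_of_ne_zero hi).trans_le (Finset.le_sup (f := id) hm i)).ne'

/-- The degree of the least common multiple of the generators of degree at least two, the quantity
that decreases when passing from `I` to `I : xᵢ` and to `I + (xᵢ)`. -/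
noncomputable def nonlinearLcmDegree (G : Finset (σ →₀ ℕ)) : ℕ :=
  ((G.filter (2 ≤ ·.degree)).sup id).degree

theorem nonlinearLcmDegree_lt {H : Finset (σ →₀ ℕ)} {m : σ →₀ ℕ} (hm : m ∈ G)
    (hdeg : 2 ≤ m.degree) (hi : m i ≠ 0)
    (hH : ∀ m' ∈ H, 2 ≤ m'.degree →
      m' ≤ (G.filter (2 ≤ ·.degree)).sup id - Finsupp.single i 1) :
    nonlinearLcmDegree H < nonlinearLcmDegree G := by
  have hne :=
    sup_apply_ne_zero (G := G.filter (2 ≤ ·.degree)) (Finset.mem_filter.2 ⟨hm, hdeg⟩) hi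
  rw [nonlinearLcmDegree, nonlinearLcmDegree, ← degree_tsub_single_add_one hne,
    Nat.lt_add_one_iff]
  exact Finsupp.degree_mono (Finset.sup_le fun m' hm' =>
    hH m' (Finset.mem_filter.1 hm').1 (Finset.mem_filter.1 hm').2)

theorem nonlinearLcmDegree_colonExponents_lt [DecidableEq σ] {m : σ →₀ ℕ} (hm : m ∈ G)
    (hdeg : 2 ≤ m.degree) (hi : m i ≠ 0) :
    nonlinearLcmDegree (colonExponents i G) < nonlinearLcmDegree G := by
  refine nonlinearLcmDegree_lt hm hdeg hi fun m' hm' hdeg' => ?_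
  obtain ⟨a, ha, rfl⟩ := Finset.mem_image.1 hm'
  exact tsub_le_tsub_right (Finset.le_sup (f := id) (Finset.mem_filter.2
    ⟨ha, hdeg'.trans (Finsupp.degree_mono tsub_le_self)⟩)) _

theorem nonlinearLcmDegree_addVarExponents_lt [DecidableEq σ] {m : σ →₀ ℕ} (hm : m ∈ G)
    (hdeg : 2 ≤ m.degree) (hi : m i ≠ 0) :
    nonlinearLcmDegree (addVarExponents i G) < nonlinearLcmDegree G := by
  refine nonlinearLcmDegree_lt hm hdeg hi fun m' hm' hdeg' => ?_
  rcases Finset.mem_insert.1 hm' with rfl | hm'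
  · rw [Finsupp.degree_single] at hdeg'
    omega
  · obtain ⟨hm'G, hm'i⟩ := Finset.mem_filter.1 hm'
    rw [← tsub_single_eq_self hm'i]
    exact tsub_le_tsub_right (Finset.le_sup (f := id) (Finset.mem_filter.2 ⟨hm'G, hdeg'⟩)) _

theorem exists_eq_image_single [DecidableEq σ] (h0 : 0 ∉ G) (hG : ∀ m ∈ G, m.degree < 2) :
    ∃ S : Finset σ, S.image (Finsupp.single · 1) = G := by
  have hrange : (G : Set (σ →₀ ℕ)) ⊆ (Finsupp.single · 1) '' Set.univ := by
    intro m hm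
    rw [Set.image_univ, Finsupp.range_single_one]
    have hm0 : m.degree ≠ 0 := fun h => h0 ((Finsupp.degree_eq_zero_iff m).1 h ▸ hm)
    exact Nat.le_antisymm (Nat.lt_succ_iff.1 (hG m hm)) (Nat.one_le_iff_ne_zero.2 hm0)
  obtain ⟨S, -, hS⟩ := Finset.subset_set_image_iff.1 hrange
  exact ⟨S, hS⟩

theorem card_le_degree {S : Finset σ} {s : σ →₀ ℕ} (h : ∀ i ∈ S, s i ≠ 0) : S.card ≤ s.degree :=
  calc S.card ≤ s.support.card := Finset.card_le_card fun i hi => Finsupp.mem_support_iff.2 (h i hi)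
    _ = ∑ _i ∈ s.support, 1 := Finset.card_eq_sum_ones _
    _ ≤ s.degree := Finset.sum_le_sum fun _ hi =>
      Nat.one_le_iff_ne_zero.2 (Finsupp.mem_support_iff.1 hi)

theorem regularityLE_monomialIdeal_of_colon_of_addVar [DecidableEq σ] {r : ℤ} (i : σ)
    (hcolon : RegularityLE (standardGrading σ k)
      (quotientGrading (standardGrading σ k) (monomialIdeal k (colonExponents i G))) (r - 1))
    (hadd : RegularityLE (standardGrading σ k)
      (quotientGrading (standardGrading σ k) (monomialIdeal k (addVarExponents i G))) r) :
    RegularityLE (standardGrading σ k)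
      (quotientGrading (standardGrading σ k) (monomialIdeal k G)) r := by
  rw [monomialIdeal_colonExponents] at hcolon
  rw [monomialIdeal_addVarExponents] at hadd
  exact regularityLE_quotient_of_colon_of_sup isHomogeneous_monomialIdeal
    (X_mem_standardGrading k i) hcolon hadd

theorem regularityLE_monomialIdeal_addVar [DecidableEq σ] {r : ℤ} (i : σ)
    (hcolon : RegularityLE (standardGrading σ k)
      (quotientGrading (standardGrading σ k) (monomialIdeal k (colonExponents i G))) r)
    (h : RegularityLE (standardGrading σ k)
      (quotientGrading (standardGrading σ k) (monomialIdeal k G)) r) :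
    RegularityLE (standardGrading σ k)
      (quotientGrading (standardGrading σ k) (monomialIdeal k (addVarExponents i G))) r := by
  rw [monomialIdeal_colonExponents] at hcolon
  rw [monomialIdeal_addVarExponents]
  refine regularityLE_quotient_sup isHomogeneous_monomialIdeal (X_mem_standardGrading k i) ?_ h
  rwa [add_sub_cancel_right]

theorem regularityLE_monomialIdeal_variables [DecidableEq σ] (S : Finset σ) :
    RegularityLE (standardGrading σ k) (quotientGrading (standardGrading σ k)
      (monomialIdeal k (S.image (Finsupp.single · 1)))) 0 := by
  induction S using Finset.induction_on with
  | empty =>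
    have hbot : monomialIdeal k ((∅ : Finset σ).image (Finsupp.single · 1)) = ⊥ := by
      simp [monomialIdeal]
    rw [hbot]
    exact regularityLE_quotient_bot
  | insert i S hi ih =>
    have hzero : ∀ m ∈ S.image (Finsupp.single · 1), m i = 0 := by
      intro m hm
      obtain ⟨j, hj, rfl⟩ := Finset.mem_image.1 hm
      exact Finsupp.single_eq_of_ne (ne_of_mem_of_not_mem hj hi).symm
    have hcolon : colonExponents i (S.image (Finsupp.single · 1)) =
        S.image (Finsupp.single · 1) :=
      (Finset.image_congr fun m hm => tsub_single_eq_self (hzero m hm)).trans Finset.image_id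
    have hadd : addVarExponents i (S.image (Finsupp.single · 1)) =
        (insert i S).image (Finsupp.single · 1) := by
      rw [addVarExponents, Finset.filter_true_of_mem hzero, Finset.image_insert]
    rw [← hadd]
    exact regularityLE_monomialIdeal_addVar i (by rwa [hcolon]) ih

theorem regularityLE_monomialIdeal_of_degree_lt_two [Finite σ] [IsNoetherianRing k] {h : ℕ}
    (hG : ∀ m ∈ G, m.degree < 2) (hh : h ≤ (monomialIdeal k G).height) :
    RegularityLE (standardGrading σ k) (quotientGrading (standardGrading σ k) (monomialIdeal k G))
      ((G.sup id).degree - h) := by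
  classical
  by_cases htop : monomialIdeal k G = ⊤
  · rw [htop]
    exact .of_subsingleton
  obtain ⟨S, rfl⟩ := exists_eq_image_single (mt monomialIdeal_eq_top htop) hG
  have hheight : h ≤ S.card :=
    (Nat.cast_le.1 (hh.trans (height_monomialIdeal_le_card htop))).trans Finset.card_image_le
  have hcard : S.card ≤ ((S.image (Finsupp.single · 1)).sup id).degree :=
    card_le_degree fun i hi =>
      sup_apply_ne_zero (m := Finsupp.single i 1) (Finset.mem_image_of_mem _ hi) (by simp)
  exact (regularityLE_monomialIdeal_variables S).mono (by omega)

theorem regularityLE_monomialIdeal [Finite σ] [IsNoetherianRing k] {h : ℕ}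
    (hh : h ≤ (monomialIdeal k G).height) :
    RegularityLE (standardGrading σ k) (quotientGrading (standardGrading σ k) (monomialIdeal k G))
      ((G.sup id).degree - h) := by
  classical
  induction hN : nonlinearLcmDegree G using Nat.strong_induction_on generalizing G with
  | _ N ih =>
  subst hN
  by_cases hlin : ∀ m ∈ G, m.degree < 2
  · exact regularityLE_monomialIdeal_of_degree_lt_two hlin hh
  · push Not at hlin
    obtain ⟨m, hm, hdeg⟩ := hlin
    obtain ⟨i, hi⟩ : ∃ i, m i ≠ 0 := by
      by_contra! hm0
      obtain rfl : m = 0 := Finsupp.ext hm0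
      simp at hdeg
    have hne := sup_apply_ne_zero hm hi
    refine regularityLE_monomialIdeal_of_colon_of_addVar i ?_ ?_
    · refine (ih _ (nonlinearLcmDegree_colonExponents_lt hm hdeg hi) (hh.trans ?_) rfl).mono ?_
      · rw [monomialIdeal_colonExponents]
        exact Ideal.height_mono Ideal.le_colon
      · have := Finsupp.degree_mono (sup_colonExponents_le (i := i) (G := G))
        have := degree_tsub_single_add_one hne
        omega
    · refine (ih _ (nonlinearLcmDegree_addVarExponents_lt hm hdeg hi) (hh.trans ?_) rfl).mono ?_
      · rw [monomialIdeal_addVarExponents]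
        exact Ideal.height_mono le_sup_left
      · have := Finsupp.degree_mono (sup_addVarExponents_le hne)
        omega

end MonomialIdeals

theorem idealHeight_eq_height {R : Type*} [CommRing R] (I : Ideal R) :
    idealHeight I = I.height := by
  apply le_antisymm
  · rw [Ideal.height_eq_inf_minimalPrimes]
    refine le_iInf₂ fun p hp => ?_
    let P : PrimeSpectrum R := ⟨p, hp.1.1⟩
    calc idealHeight I ≤ Order.height P := iInf₂_le P hp.1.2
      _ = p.height := P.height_eq_orderHeight.symm
  · refine le_iInf₂ fun p hp => ?_
    rw [← p.height_eq_orderHeight]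
    exact Ideal.height_mono hp

section QuotientRegularity

variable {k : Type*} [Field k] {n : ℕ} {I : Ideal (MvPolynomial (Fin n) k)} {r : ℤ}

theorem homogOfDeg_of_mem_standardGrading {p : MvPolynomial (Fin n) k} {d : ℤ}
    (hp : p ∈ standardGrading (Fin n) k d) : HomogOfDeg p d := by
  refine or_iff_not_imp_left.2 fun hp0 => ?_
  have hdeg : ∀ m, p.coeff m ≠ 0 → (m.degree : ℤ) = d := fun m hm =>
    (weight_one_int m).symm.trans (hp hm)
  obtain ⟨m, hm⟩ := ne_zero_iff.1 hp0
  refine ⟨m.degree, hdeg m hm, fun m' hm' => ?_⟩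
  rw [Pi.one_def, ← Finsupp.degree_eq_weight_one]
  exact_mod_cast (hdeg m' hm').trans (hdeg m hm).symm

theorem MatrixResolution.exists_aug_eq
    (F : MatrixResolution (standardGrading (Fin n) k) (quotientGrading (standardGrading _ k) I)) :
    ∃ v : Fin (F.rank 0) → MvPolynomial (Fin n) k, (∀ j, HomogOfDeg (v j) (F.twist 0 j)) ∧
      F.aug = fun w : Fin (F.rank 0) → MvPolynomial (Fin n) k =>
        Ideal.Quotient.mk I (∑ j, w j * v j) := by
  choose v hv haug using F.aug_mem
  refine ⟨v, fun j => homogOfDeg_of_mem_standardGrading (hv j), _root_.funext fun w => ?_⟩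
  calc F.aug w = ∑ j, w j • F.aug (Pi.single j 1) := by
        conv_lhs => rw [← (Pi.basisFun _ _).sum_repr w, map_sum]
        simp only [map_smul, Pi.basisFun_repr, Pi.basisFun_apply]
    _ = ∑ j, w j • Ideal.Quotient.mk I (v j) := by simp only [← haug]; rfl
    _ = Ideal.Quotient.mk I (∑ j, w j * v j) := by simp only [map_sum, map_mul]; rfl

theorem RegularityLE.exists_gradedFreeRes
    (h : RegularityLE (standardGrading (Fin n) k) (quotientGrading (standardGrading _ k) I) r) :
    ∃ F : GradedFreeRes I, ∀ i j, F.D i j - (i : ℤ) ≤ r := by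
  obtain ⟨l, hl⟩ := h
  obtain ⟨F, hlen, htwist⟩ := hl.exists_matrixResolution
  obtain ⟨v, hv, haug⟩ := F.exists_aug_eq
  exact ⟨{
    len := l
    b := F.rank
    hb := fun i hi => hlen i hi.le
    D := F.twist
    A := F.diff
    v := v
    hv := hv
    hA := fun i j j' => homogOfDeg_of_mem_standardGrading (F.diff_mem i j j')
    haug := haug ▸ F.aug_surjective
    hex0 := haug ▸ F.exact_aug
    hex := F.exact_diff }, fun i j => sub_le_iff_le_add.2 (htwist i j)⟩

theorem GradedFreeRes.exists_v_ne_zero (F : GradedFreeRes I) (hI : I ≠ ⊤) : ∃ j, F.v j ≠ 0 := by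
  by_contra! hv
  obtain ⟨w, hw⟩ := F.haug 1
  refine hI ((Ideal.eq_top_iff_one I).2 (Ideal.Quotient.eq_zero_iff_mem.1 ?_))
  simpa only [hv, mul_zero, Finset.sum_const_zero, map_zero, map_one] using hw.symm

theorem GradedFreeRes.exists_zero_le_D (F : GradedFreeRes I) (hI : I ≠ ⊤) : ∃ j, 0 ≤ F.D 0 j := by
  obtain ⟨j, hj⟩ := F.exists_v_ne_zero hI
  obtain ⟨m, hm, -⟩ := (F.hv j).resolve_left hj
  exact ⟨j, hm ▸ m.cast_nonneg⟩

theorem RegularityLE.regQuot_le (hI : I ≠ ⊤)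
    (h : RegularityLE (standardGrading (Fin n) k) (quotientGrading (standardGrading _ k) I) r) :
    regQuot I ≤ r := by
  refine csInf_le ⟨0, ?_⟩ h.exists_gradedFreeRes
  rintro s ⟨F, hF⟩
  obtain ⟨j, hj⟩ := F.exists_zero_le_D hI
  exact hj.trans (by simpa using hF 0 j)

end QuotientRegularity

theorem degree_sup_id {σ : Type*} [Fintype σ] (G : Finset (σ →₀ ℕ)) :
    (G.sup id).degree = ∑ i, G.sup fun m => m i := by
  rw [Finsupp.degree_eq_sum]
  exact Finset.sum_congr rfl fun i _ =>
    Finset.apply_sup_eq_sup_comp (fun m : σ →₀ ℕ => m i) (fun _ _ => rfl) rfl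

theorem reg_le_deg_lcm_sub_height_general {k : Type*} [Field k] {n : ℕ}
    (I : Ideal (MvPolynomial (Fin n) k)) (G : Finset (Fin n →₀ ℕ))
    (hG : I = Ideal.span ((fun m => monomial m (1 : k)) '' (G : Set (Fin n →₀ ℕ))))
    (h : ℕ) (hh : idealHeight I = (h : ℕ∞)) :
    regIdeal I ≤ ((∑ i : Fin n, G.sup fun m => m i : ℕ) : ℤ) - (h : ℤ) + 1 := by
  rw [idealHeight_eq_height] at hh
  have hI : I ≠ ⊤ := by
    rintro rfl
    exact ENat.natCast_ne_top h (hh.symm.trans Ideal.height_top)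
  change I = monomialIdeal k G at hG
  subst hG
  rw [regIdeal, ← degree_sup_id]
  exact add_le_add_left ((regularityLE_monomialIdeal hh.ge).regQuot_le hI) 1

/-- **Corollary (Hoa–Trung).** Let `I` be a nonzero monomial ideal with minimal monomial
generating set `G`. Then `reg I ≤ deg lcm(I) - height I + 1`, where `lcm(I)` is the least
common multiple of the minimal monomial generators (so
`deg lcm(I) = ∑ᵢ maxₘ∈G m(i)`). -/
theorem reg_le_deg_lcm_sub_height {k : Type*} [Field k] {n : ℕ}
    (I : Ideal (MvPolynomial (Fin n) k)) (hI0 : I ≠ ⊥)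
    (G : Finset (Fin n →₀ ℕ))
    (hG : I = Ideal.span ((fun m => monomial m (1 : k)) '' (G : Set (Fin n →₀ ℕ))))
    (hmin : ∀ m ∈ G, (monomial m (1 : k)) ∉
      Ideal.span ((fun m' => monomial m' (1 : k)) '' ((G.erase m : Finset (Fin n →₀ ℕ)) :
        Set (Fin n →₀ ℕ))))
    (h : ℕ) (hh : idealHeight I = (h : ℕ∞)) :
    regIdeal I ≤ ((∑ i : Fin n, G.sup fun m => m i : ℕ) : ℤ) - (h : ℤ) + 1 :=
  reg_le_deg_lcm_sub_height_general I G hG h hh
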